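/- (Rank estimation lemma.) Let XA ∈ ℝ^{n×m} be fixed and let M be a random n×m matrix on some probability space. For μ > 0 define r̂ = max{j : σ_j(M) ≥ μ}. If r = rank(XA) and δ_r = σ_r(XA) > (1+ξ)μ for some ξ ∈ (0,1], then P{r̂ = r} ≥ 1 − P{σ_1(M − XA) ≥ ξμ}. -/

import Mathlib

open MeasureTheory ProbabilityTheory Matrix Set
open scoped ENNReal NNReal

noncomputable section

/-- Euclidean (ℓ₂) norm of a finitely indexed real vector. -/
def l2norm {I : Type*} [Fintype I] (v : I → ℝ) : ℝ := Real.sqrt (∑ i, v i ^ 2)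

/-- Frobenius norm of a real matrix. -/
def frobNorm {I J : Type*} [Fintype I] [Fintype J] (M : Matrix I J ℝ) : ℝ :=
  Real.sqrt (∑ i, ∑ j, M i j ^ 2)

/-- ℓ₂/ℓ₁ norm: the sum of the ℓ₂ norms of the rows. -/
def norm21 {I J : Type*} [Fintype I] [Fintype J] (M : Matrix I J ℝ) : ℝ :=
  ∑ i, l2norm (M i)

open Classical in
/-- Row support: indices of nonzero rows. -/
def rowSupport {I J : Type*} [Fintype I] [Fintype J] (M : Matrix I J ℝ) : Finset I :=
  Finset.univ.filter (fun i => M i ≠ 0)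

/-- The j-th largest singular value (j ≥ 1), via the Courant–Fischer max–min
characterization: `σ_j(M) = max_{dim V = j} min_{v ∈ V, ‖v‖=1} ‖Mv‖`. -/
def singularValue {I J : Type*} [Fintype I] [Fintype J] (M : Matrix I J ℝ) (j : ℕ) : ℝ :=
  sSup { t | ∃ V : Submodule ℝ (J → ℝ), Module.finrank ℝ V = j ∧
    t = sInf { u | ∃ v ∈ V, l2norm v = 1 ∧ u = l2norm (M.mulVec v) } }

/-- Operator norm (largest singular value). -/
def opNorm {I J : Type*} [Fintype I] [Fintype J] (M : Matrix I J ℝ) : ℝ :=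
  sSup { t | ∃ v : J → ℝ, l2norm v = 1 ∧ t = l2norm (M.mulVec v) }

/-- Schatten-q norm. -/
def schattenNorm {I J : Type*} [Fintype I] [Fintype J] (M : Matrix I J ℝ) (q : ℝ) : ℝ :=
  (∑ i ∈ Finset.Icc 1 (min (Fintype.card I) (Fintype.card J)), singularValue M i ^ q) ^ (1 / q)

/-- Squared lower k-sparse Riesz constant `κ₋²(k)`:
the minimum over column subsets B with |B| = k of the smallest eigenvalue of X_B' X_B. -/
def kappaMinusSq {n p : ℕ} (X : Matrix (Fin n) (Fin p) ℝ) (k : ℕ) : ℝ :=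
  sInf { t | ∃ B : Finset (Fin p), B.card = k ∧ ∃ v : Fin p → ℝ,
    (∀ i, i ∉ B → v i = 0) ∧ l2norm v = 1 ∧ t = l2norm (X.mulVec v) ^ 2 }

/-- Squared upper k-sparse Riesz constant `κ₊²(k)`. -/
def kappaPlusSq {n p : ℕ} (X : Matrix (Fin n) (Fin p) ℝ) (k : ℕ) : ℝ :=
  sSup { t | ∃ B : Finset (Fin p), B.card = k ∧ ∃ v : Fin p → ℝ,
    (∀ i, i ∉ B → v i = 0) ∧ l2norm v = 1 ∧ t = l2norm (X.mulVec v) ^ 2 }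

def kappaMinus {n p : ℕ} (X : Matrix (Fin n) (Fin p) ℝ) (k : ℕ) : ℝ :=
  Real.sqrt (kappaMinusSq X k)

def kappaPlus {n p : ℕ} (X : Matrix (Fin n) (Fin p) ℝ) (k : ℕ) : ℝ :=
  Real.sqrt (kappaPlusSq X k)

/-- Membership in the parameter space Θ(s, r, d, γ): rank r, all nonzero singular values in
(d, γd], and at most s nonzero rows. (Singular values are automatically nonincreasing.) -/
def memTheta {p m : ℕ} (A : Matrix (Fin p) (Fin m) ℝ) (s r : ℕ) (d γ : ℝ) : Prop :=
  A.rank = r ∧ 0 < d ∧ singularValue A 1 ≤ γ * d ∧ d < singularValue A r ∧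
    (rowSupport A).card ≤ s

/-- `V` is a matrix of top-r right singular vectors of `M`: the columns of `V` are orthonormal
eigenvectors of `MᵀM`, the j-th column with eigenvalue `σ_j(M)²`. -/
def IsRightSingularVectors {I J : Type*} [Fintype I] [Fintype J] {r : ℕ}
    (M : Matrix I J ℝ) (V : Matrix J (Fin r) ℝ) : Prop :=
  Vᵀ * V = 1 ∧ ∀ j : Fin r,
    (Mᵀ * M).mulVec (fun i => V i j) = (singularValue M (j.1 + 1)) ^ 2 • (fun i => V i j)

/-- `U` is a matrix of top-r left singular vectors of `M`. -/
def IsLeftSingularVectors {I J : Type*} [Fintype I] [Fintype J] {r : ℕ}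
    (M : Matrix I J ℝ) (U : Matrix I (Fin r) ℝ) : Prop :=
  IsRightSingularVectors Mᵀ U

instance matrixMeasurableSpace {n m : ℕ} : MeasurableSpace (Matrix (Fin n) (Fin m) ℝ) :=
  (inferInstance : MeasurableSpace (Fin n → Fin m → ℝ))

/-- Law of an n×m random matrix with i.i.d. N(0, v) entries. -/
def gaussianMatrix (n m : ℕ) (v : ℝ≥0) : Measure (Matrix (Fin n) (Fin m) ℝ) :=
  Measure.pi fun _ : Fin n => Measure.pi fun _ : Fin m => gaussianReal 0 v

open Classical in
/-- Kullback–Leibler divergence D(P‖Q). -/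
def klDivM {Ω : Type*} [MeasurableSpace Ω] (P Q : Measure Ω) : ℝ≥0∞ :=
  if P ≪ Q ∧ Integrable (fun x => Real.log (P.rnDeriv Q x).toReal) P
  then ENNReal.ofReal (∫ x, Real.log (P.rnDeriv Q x).toReal ∂P)
  else ∞

/-- ε-packing number of T with respect to the distance ρ: the maximal cardinality of a subset
of T whose pairwise ρ-distances are all at least ε. -/
def packingNumber {α : Type*} (T : Set α) (ρ : α → α → ℝ) (ε : ℝ) : ℕ :=
  sSup { k | ∃ S : Finset α, ↑S ⊆ T ∧ (∀ x ∈ S, ∀ y ∈ S, x ≠ y → ε ≤ ρ x y) ∧ S.card = k }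

/-- Moore–Penrose pseudoinverse (characterized by the four Penrose equations). -/
def IsMoorePenrose {k : ℕ} (M Mi : Matrix (Fin k) (Fin k) ℝ) : Prop :=
  M * Mi * M = M ∧ Mi * M * Mi = Mi ∧ (M * Mi)ᵀ = M * Mi ∧ (Mi * M)ᵀ = Mi * M

/-! By Weyl's inequality `|σ_j(M) - σ_j(XA)| ≤ σ_1(M - XA)`, and `σ_j(XA) = 0` for `j > r`. Hence
on the event `σ_1(M - XA) < ξμ` we have `σ_r(M) > (1 + ξ)μ - ξμ = μ`, while `σ_j(M) < ξμ ≤ μ` for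
`j > r`, so that `r̂ = r`. -/

theorem l2norm_eq_norm_toLp {I : Type*} [Fintype I] (v : I → ℝ) :
    l2norm v = ‖WithLp.toLp 2 v‖ := by
  simp only [l2norm, EuclideanSpace.norm_eq, Real.norm_eq_abs, sq_abs]

theorem l2norm_nonneg {I : Type*} [Fintype I] (v : I → ℝ) : 0 ≤ l2norm v :=
  Real.sqrt_nonneg _

@[simp]
theorem l2norm_zero {I : Type*} [Fintype I] : l2norm (0 : I → ℝ) = 0 := by
  simp [l2norm]

theorem l2norm_pos {I : Type*} [Fintype I] {v : I → ℝ} (hv : v ≠ 0) : 0 < l2norm v := by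
  rw [l2norm_eq_norm_toLp, norm_pos_iff]
  simpa using hv

@[simp]
theorem l2norm_neg {I : Type*} [Fintype I] (v : I → ℝ) : l2norm (-v) = l2norm v := by
  simp [l2norm]

theorem l2norm_smul {I : Type*} [Fintype I] (c : ℝ) (v : I → ℝ) :
    l2norm (c • v) = |c| * l2norm v := by
  rw [l2norm_eq_norm_toLp, l2norm_eq_norm_toLp, WithLp.toLp_smul, norm_smul, Real.norm_eq_abs]

theorem l2norm_add_le {I : Type*} [Fintype I] (v w : I → ℝ) :
    l2norm (v + w) ≤ l2norm v + l2norm w := by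
  simp only [l2norm_eq_norm_toLp, WithLp.toLp_add]
  exact norm_add_le _ _

theorem inf_ker_ne_bot_of_finrank_range_lt {K E F : Type*} [DivisionRing K] [AddCommGroup E]
    [Module K E] [AddCommGroup F] [Module K F] {f : E →ₗ[K] F} [Module.Finite K f.range]
    {V : Submodule K E} (hV : Module.finrank K f.range < Module.finrank K V) :
    V ⊓ f.ker ≠ ⊥ := by
  have : Module.Finite K V := Module.finite_of_finrank_pos (Nat.zero_lt_of_lt hV)
  have hker : (f.rangeRestrict.domRestrict V).ker ≠ ⊥ := LinearMap.ker_ne_bot_of_finrank_lt hV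
  obtain ⟨v, hv, hv0⟩ := Submodule.exists_mem_ne_zero_of_ne_bot hker
  refine (Submodule.ne_bot_iff _).2 ⟨v, ⟨v.2, ?_⟩, by simpa using hv0⟩
  simpa [Subtype.ext_iff] using hv

section SingularValue

variable {I J : Type*} [Fintype I] [Fintype J]

theorem exists_mem_l2norm_eq_one {V : Submodule ℝ (J → ℝ)} (hV : V ≠ ⊥) :
    ∃ v ∈ V, l2norm v = 1 := by
  obtain ⟨v, hv, hv0⟩ := V.exists_mem_ne_zero_of_ne_bot hV
  have hpos : 0 < l2norm v := l2norm_pos hv0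
  refine ⟨(l2norm v)⁻¹ • v, V.smul_mem _ hv, ?_⟩
  rw [l2norm_smul, abs_of_pos (inv_pos.2 hpos), inv_mul_cancel₀ hpos.ne']

theorem l2norm_mulVec_le_frobNorm_mul (A : Matrix I J ℝ) (v : J → ℝ) :
    l2norm (A *ᵥ v) ≤ frobNorm A * l2norm v := by
  have hA : 0 ≤ ∑ i, ∑ j, A i j ^ 2 := by positivity
  rw [l2norm, frobNorm, l2norm, ← Real.sqrt_mul hA, Finset.sum_mul]
  gcongr with i
  exact Finset.sum_mul_sq_le_sq_mul_sq _ (A i) v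

/-- The smallest factor by which `A` stretches a unit vector of `V`, i.e. the inner minimum in the
Courant–Fischer formula for `singularValue`. On `V = ⊥`, which has no unit vector, it is `0`. -/
def minStretch (A : Matrix I J ℝ) (V : Submodule ℝ (J → ℝ)) : ℝ :=
  sInf {u | ∃ v ∈ V, l2norm v = 1 ∧ u = l2norm (A *ᵥ v)}

variable (A B : Matrix I J ℝ) {V : Submodule ℝ (J → ℝ)} {j : ℕ} {c : ℝ}

theorem minStretch_le {v : J → ℝ} (hv : v ∈ V) (hv1 : l2norm v = 1) :
    minStretch A V ≤ l2norm (A *ᵥ v) := by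
  refine csInf_le ⟨0, ?_⟩ ⟨v, hv, hv1, rfl⟩
  rintro _ ⟨w, -, -, rfl⟩
  exact l2norm_nonneg _

variable {A} in
theorem le_minStretch (hV : V ≠ ⊥) (h : ∀ v ∈ V, l2norm v = 1 → c ≤ l2norm (A *ᵥ v)) :
    c ≤ minStretch A V := by
  obtain ⟨v, hv, hv1⟩ := exists_mem_l2norm_eq_one hV
  refine le_csInf ⟨_, v, hv, hv1, rfl⟩ ?_
  rintro _ ⟨w, hw, hw1, rfl⟩
  exact h w hw hw1

theorem minStretch_nonneg (V : Submodule ℝ (J → ℝ)) : 0 ≤ minStretch A V := by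
  refine Real.sInf_nonneg ?_
  rintro _ ⟨v, -, -, rfl⟩
  exact l2norm_nonneg _

theorem minStretch_bot : minStretch A ⊥ = 0 := by
  simp [minStretch]

theorem minStretch_le_frobNorm (V : Submodule ℝ (J → ℝ)) : minStretch A V ≤ frobNorm A := by
  obtain rfl | hV := eq_or_ne V ⊥
  · exact (minStretch_bot A).trans_le (Real.sqrt_nonneg _)
  · obtain ⟨v, hv, hv1⟩ := exists_mem_l2norm_eq_one hV
    calc minStretch A V ≤ l2norm (A *ᵥ v) := minStretch_le A hv hv1
      _ ≤ frobNorm A * l2norm v := l2norm_mulVec_le_frobNorm_mul A v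
      _ = frobNorm A := by rw [hv1, mul_one]

theorem minStretch_le_singularValue (hV : Module.finrank ℝ V = j) :
    minStretch A V ≤ singularValue A j := by
  refine le_csSup ⟨frobNorm A, ?_⟩ ⟨V, hV, rfl⟩
  rintro _ ⟨W, -, rfl⟩
  exact minStretch_le_frobNorm A W

variable {A} in
theorem singularValue_le (hc : 0 ≤ c)
    (h : ∀ V : Submodule ℝ (J → ℝ), Module.finrank ℝ V = j → minStretch A V ≤ c) :
    singularValue A j ≤ c := by
  refine Real.sSup_le ?_ hc
  rintro _ ⟨V, hV, rfl⟩
  exact h V hV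

theorem singularValue_nonneg (j : ℕ) : 0 ≤ singularValue A j := by
  refine Real.sSup_nonneg ?_
  rintro _ ⟨V, -, rfl⟩
  exact minStretch_nonneg A V

theorem singularValue_neg (j : ℕ) : singularValue (-A) j = singularValue A j := by
  simp only [singularValue, neg_mulVec, l2norm_neg]

theorem l2norm_mulVec_le_singularValue_one_mul (v : J → ℝ) :
    l2norm (A *ᵥ v) ≤ singularValue A 1 * l2norm v := by
  obtain rfl | hv := eq_or_ne v 0
  · simp
  have hspan : (ℝ ∙ v) ≠ ⊥ := by simpa using hv
  rw [← div_le_iff₀ (l2norm_pos hv)]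
  refine le_trans (le_minStretch hspan ?_)
    (minStretch_le_singularValue A (finrank_span_singleton hv))
  intro w hw hw1
  obtain ⟨a, rfl⟩ := Submodule.mem_span_singleton.1 hw
  rw [l2norm_smul] at hw1
  rw [mulVec_smul, l2norm_smul, div_eq_inv_mul, eq_inv_of_mul_eq_one_left hw1]

theorem minStretch_le_minStretch_add_singularValue_sub_one (V : Submodule ℝ (J → ℝ)) :
    minStretch A V ≤ minStretch B V + singularValue (A - B) 1 := by
  obtain rfl | hV := eq_or_ne V ⊥
  · simpa only [minStretch_bot, zero_add] using singularValue_nonneg (A - B) 1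
  rw [← sub_le_iff_le_add]
  refine le_minStretch hV fun v hv hv1 ↦ sub_le_iff_le_add.2 ?_
  calc minStretch A V ≤ l2norm (A *ᵥ v) := minStretch_le A hv hv1
    _ = l2norm (B *ᵥ v + (A - B) *ᵥ v) := by rw [sub_mulVec, add_sub_cancel]
    _ ≤ l2norm (B *ᵥ v) + l2norm ((A - B) *ᵥ v) := l2norm_add_le _ _
    _ ≤ l2norm (B *ᵥ v) + singularValue (A - B) 1 := by
      simpa only [hv1, mul_one, add_le_add_iff_left] using
        l2norm_mulVec_le_singularValue_one_mul (A - B) v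

theorem singularValue_le_singularValue_add_singularValue_sub_one (j : ℕ) :
    singularValue A j ≤ singularValue B j + singularValue (A - B) 1 :=
  singularValue_le (add_nonneg (singularValue_nonneg B j) (singularValue_nonneg (A - B) 1))
    fun V hV ↦ (minStretch_le_minStretch_add_singularValue_sub_one A B V).trans
      (by gcongr; exact minStretch_le_singularValue B hV)

variable {A} in
theorem singularValue_eq_zero_of_rank_lt (hj : A.rank < j) : singularValue A j = 0 := by
  refine le_antisymm (singularValue_le le_rfl fun V hV ↦ ?_) (singularValue_nonneg A j)
  obtain ⟨v, ⟨hvV, hvker⟩, hv1⟩ :=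
    exists_mem_l2norm_eq_one (inf_ker_ne_bot_of_finrank_range_lt (hj.trans_eq hV.symm))
  have hAv : A *ᵥ v = 0 := by simpa using hvker
  simpa only [hAv, l2norm_zero] using minStretch_le A hvV hv1

variable {A B} in
theorem isGreatest_rank_of_singularValue_sub_lt {μ : ℝ} (hμ : singularValue (B - A) 1 < μ)
    (hgap : μ + singularValue (B - A) 1 ≤ singularValue A A.rank) :
    IsGreatest {j : ℕ | μ ≤ singularValue B j} A.rank := by
  constructor
  · have hweyl := singularValue_le_singularValue_add_singularValue_sub_one A B A.rank
    rw [← neg_sub, singularValue_neg] at hweyl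
    exact le_of_add_le_add_right (hgap.trans hweyl)
  · intro j (hj : μ ≤ singularValue B j)
    by_contra! hrank
    have hweyl := singularValue_le_singularValue_add_singularValue_sub_one B A j
    rw [singularValue_eq_zero_of_rank_lt hrank, zero_add] at hweyl
    exact (hj.trans hweyl).not_gt hμ

end SingularValue

theorem stmt4_general {Ω : Type*} [MeasurableSpace Ω] (P : Measure Ω)
    {I J : Type*} [Fintype I] [Fintype J] (A : Matrix I J ℝ) (M : Ω → Matrix I J ℝ)
    {μ ε : ℝ} (hε : ε ≤ μ) (hgap : μ + ε ≤ singularValue A A.rank) :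
    P univ - P {ω | ε ≤ singularValue (M ω - A) 1} ≤
      P {ω | sSup {j : ℕ | μ ≤ singularValue (M ω) j} = A.rank} := by
  refine le_measure_sdiff.trans (measure_mono fun ω hω ↦ ?_)
  have hlt : singularValue (M ω - A) 1 < ε := not_le.1 hω.2
  exact (isGreatest_rank_of_singularValue_sub_lt (hlt.trans_le hε) (by linarith)).csSup_eq

/-- Rank estimation lemma. If `r = rank(XA)` and `σ_r(XA) > (1+ξ)μ`, then with
`r̂ = max{j : σ_j(M) ≥ μ}` we have `P{r̂ = r} ≥ 1 − P{σ_1(M − XA) ≥ ξμ}`. -/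
theorem stmt4 {Ω : Type*} [MeasurableSpace Ω] (P : Measure Ω) [IsProbabilityMeasure P]
    {n m : ℕ} (XA : Matrix (Fin n) (Fin m) ℝ) (M : Ω → Matrix (Fin n) (Fin m) ℝ)
    (μ ξ : ℝ) (hμ : 0 < μ) (hξ : ξ ∈ Set.Ioc (0 : ℝ) 1)
    (r : ℕ) (hr : r = (XA).rank)
    (hδ : (1 + ξ) * μ < singularValue XA r) :
    1 - P {ω | ξ * μ ≤ singularValue (M ω - XA) 1} ≤
      P {ω | sSup {j : ℕ | μ ≤ singularValue (M ω) j} = r} := by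
  subst hr
  simpa only [measure_univ] using stmt4_general P XA M
    (mul_le_of_le_one_left hμ.le hξ.2) (by linarith)

end
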